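/- Let T=(V,E) be a directed (rooted or unrooted) tree with generations gen_n (n∈ℕ for rooted trees, n∈ℤ with respect to a fixed vertex for unrooted trees), and let L(V) denote the set of leaves of T. Let f:V→𝕂 be a flow, that is, f(v)=∑_{u∈Chi(v)}f(u) with unconditional convergence for every non-leaf v∈V. Then there exists a finite 𝕂-valued Borel measure μ on the boundary ∂T such that f(v)=μ(∂T_v) for all v∈V if and only if ∑_{v∈L(V)}|f(v)|<∞ and sup_{n≥0}∑_{v∈gen_n}|f(v)|<∞. In that case, μ is uniquely determined by f. -/

import Mathlib

open scoped ENNReal NNReal Topology Classical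
open Filter

namespace PaperTree

/-! ### Directed trees -/

variable {V : Type*}

/-- Iterated parent map of a directed tree given by a parent function. -/
def parIter (par : V → Option V) : ℕ → V → Option V
  | 0, v => some v
  | n + 1, v => (par v).bind (parIter par n)

/-- `par` is the parent function of a (countable, connected, acyclic) directed tree on `V`,
in which every vertex has at most one parent and at most one vertex (the root) has none. -/
structure IsDirectedTree (par : V → Option V) : Prop where
  countable : Countable V
  acyclic : ∀ (v : V) (n : ℕ), 0 < n → parIter par n v ≠ some v
  connected : ∀ u v : V, ∃ (m n : ℕ) (w : V), parIter par m u = some w ∧ parIter par n v = some w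
  root_unique : ∀ u v : V, par u = none → par v = none → u = v

/-- The set of children of `v`. -/
def children (par : V → Option V) (v : V) : Set V := {u : V | par u = some v}

/-- The set of descendants of `v` (including `v`); the rooted subtree `V(v)`. -/
def descendants (par : V → Option V) (v : V) : Set V := {u : V | ∃ n : ℕ, parIter par n u = some v}

def IsLeafV (par : V → Option V) (v : V) : Prop := children par v = ∅

def Leafless (par : V → Option V) : Prop := ∀ v : V, children par v ≠ ∅

def IsRoot (par : V → Option V) (v : V) : Prop := par v = none

def Rooted (par : V → Option V) : Prop := ∃ v : V, IsRoot par v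

def Unrooted (par : V → Option V) : Prop := ∀ v : V, par v ≠ none

/-- The tree has a free left end: some vertex all of whose (proper) ancestors
have exactly one child. -/
def HasFreeLeftEnd (par : V → Option V) : Prop :=
  ∃ v : V, ∀ n : ℕ, 1 ≤ n → ∀ w : V, parIter par n v = some w → ∃! u : V, u ∈ children par w

/-- The tree has finite length (all branches have uniformly bounded length). -/
def FiniteLength (par : V → Option V) : Prop := ∃ m : ℕ, ∀ u : V, parIter par (m + 1) u = none

/-- Product of the weights along the upward path of length `n` ending at `u`;
for `u ∈ Chi^n(v)` this is `λ(v → u)`, and `pathProd par lam n v = λ(par^n(v) → v)`. -/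
def pathProd {𝕜 : Type*} [Monoid 𝕜] (par : V → Option V) (lam : V → 𝕜) : ℕ → V → 𝕜
  | 0, _ => 1
  | n + 1, u => lam u * ((par u).elim 1 (pathProd par lam n))

/-- A (finite or infinite, maximal) branch starting at `v`, encoded with `Option`. -/
def IsOptBranch (par : V → Option V) (v : V) (b : ℕ → Option V) : Prop :=
  b 0 = some v ∧
  (∀ (k : ℕ) (w : V), b k = some w →
      (children par w = ∅ ∧ b (k + 1) = none) ∨ ∃ u ∈ children par w, b (k + 1) = some u) ∧
  ∀ k : ℕ, b k = none → b (k + 1) = none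

/-- An infinite branch starting at `v` (adequate for leafless trees). -/
def IsBranch (par : V → Option V) (v : V) (b : ℕ → V) : Prop :=
  b 0 = v ∧ ∀ k : ℕ, b (k + 1) ∈ children par (b k)

/-- The `[0,∞]`-valued absolute weight associated with a scalar weight. -/
noncomputable def nw {𝕜 : Type*} [RCLike 𝕜] (μ : V → 𝕜) : V → ℝ≥0∞ := fun v => (‖μ v‖₊ : ℝ≥0∞)

/-! ### The boundary of a (rooted or unrooted) directed tree -/

/-- A maximal branch of the tree, encoded as a `ℤ`-indexed partial chain:
consecutive entries are related by the parent map, the domain is an interval,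
nonempty, and the chain extends past every non-leaf. -/
def IsBranchFun (par : V → Option V) (b : ℤ → Option V) : Prop :=
  (∃ n : ℤ, (b n).isSome) ∧
  (∀ (n : ℤ) (w : V), b n = some w → b (n - 1) = par w) ∧
  (∀ (n : ℤ) (w : V), b n = some w → children par w ≠ ∅ → (b (n + 1)).isSome) ∧
  ∀ a x c : ℤ, a ≤ x → x ≤ c → (b a).isSome → (b c).isSome → (b x).isSome

/-- Two branches are identified when they differ by an index shift. -/
def branchSetoid (par : V → Option V) : Setoid {b : ℤ → Option V // IsBranchFun par b} where
  r b c := ∃ k : ℤ, ∀ n : ℤ, b.1 (n + k) = c.1 n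
  iseqv := by
    refine ⟨fun b => ⟨0, fun n => by simp⟩, ?_, ?_⟩
    · rintro b c ⟨k, hk⟩
      refine ⟨-k, fun n => ?_⟩
      have h := hk (n - k)
      have e : n - k + k = n := by ring
      rw [e] at h
      have e2 : n + -k = n - k := by ring
      rw [e2]
      exact h.symm
    · rintro b c d ⟨k, hk⟩ ⟨l, hl⟩
      refine ⟨l + k, fun n => ?_⟩
      have e : n + (l + k) = n + l + k := by ring
      rw [e]
      exact (hk (n + l)).trans (hl n)

/-- The boundary `∂T` of the tree: the set of all (maximal) branches. -/
def TreeBoundary (par : V → Option V) : Type _ := Quotient (branchSetoid par)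

/-- `∂T_v`: the set of branches passing through the vertex `v`. -/
def boundaryThrough (par : V → Option V) (v : V) : Set (TreeBoundary par) :=
  {ζ : TreeBoundary par | ∃ b : {b : ℤ → Option V // IsBranchFun par b},
    Quotient.mk (branchSetoid par) b = ζ ∧ ∃ n : ℤ, b.1 n = some v}

/-- The Borel σ-algebra of `∂T`, generated by the basic (cl)open sets `∂T_v`. -/
instance treeBoundaryMeasurableSpace (par : V → Option V) :
    MeasurableSpace (TreeBoundary par) :=
  MeasurableSpace.generateFrom
    {S : Set (TreeBoundary par) | ∃ v : V, S = boundaryThrough par v}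

/-!
Necessity: the sets `∂T_v`, for `v` ranging over the leaves or over one generation, are pairwise
disjoint, so both sums are at most the total variation of the measure, which is finite because the
measure takes values in a finite-dimensional space.

Uniqueness: any two of the sets `∂T_v` are nested or disjoint, so they form a π-system generating
the σ-algebra, and `∂T` is the increasing union of the `∂T_w` over the ancestors `w` of a vertex.

Sufficiency: summing `‖f‖` over finer and finer levels below `v` gives an increasing sequence,
whose limit `g v` is a `[0,∞]`-valued flow dominating `‖f‖` and bounded by the sum of the two
quantities in the theorem. Every `[0,∞]`-valued flow `g` comes from a measure, by Carathéodory's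
construction; the point is that a family of sets `∂T_u` covering `∂T_v` has total weight at least
`g v`, since otherwise one could descend from `v` through children with the same defect, along a
branch which is not covered. Finally, each real coordinate `r` of `f` is the difference of the
nonnegative flows `c g + r` and `c g`, for a suitable constant `c`.
-/

open MeasureTheory

section Tree

variable {par : V → Option V}

theorem parIter_add (m n : ℕ) (v : V) :
    parIter par (m + n) v = (parIter par m v).bind (parIter par n) := by
  induction m generalizing v with
  | zero => rw [Nat.zero_add, parIter, Option.bind_some]
  | succ m ih =>
    rw [Nat.succ_add, parIter, parIter, Option.bind_assoc]
    simp only [ih]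

theorem parIter_one (v : V) : parIter par 1 v = par v :=
  Option.bind_fun_some (par v)

theorem parIter_succ' (n : ℕ) (v : V) : parIter par (n + 1) v = (parIter par n v).bind par := by
  rw [parIter_add, funext parIter_one]

theorem isSome_parIter_of_le {m n : ℕ} (hmn : m ≤ n) {v : V} (h : (parIter par n v).isSome) :
    (parIter par m v).isSome := by
  obtain ⟨k, rfl⟩ := Nat.exists_eq_add_of_le hmn
  rw [parIter_add] at h
  exact Option.isSome_of_isSome_bind h

theorem mem_descendants_self (v : V) : v ∈ descendants par v :=
  ⟨0, rfl⟩

theorem mem_descendants_trans {u v w : V} (huv : u ∈ descendants par v)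
    (hvw : v ∈ descendants par w) : u ∈ descendants par w := by
  obtain ⟨m, hm⟩ := huv
  obtain ⟨n, hn⟩ := hvw
  exact ⟨m + n, by rw [parIter_add, hm, Option.bind_some, hn]⟩

theorem children_subset_descendants (v : V) : children par v ⊆ descendants par v :=
  fun c hc => ⟨1, (parIter_one c).trans hc⟩

theorem eq_or_mem_descendants_of_mem_children {u v : V} (h : u ∈ descendants par v) :
    u = v ∨ ∃ c ∈ children par v, u ∈ descendants par c := by
  obtain ⟨_ | n, hn⟩ := h
  · exact Or.inl (Option.some_injective _ hn)
  · rw [parIter_succ', Option.bind_eq_some_iff] at hn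
    obtain ⟨c, hc, hcv⟩ := hn
    exact Or.inr ⟨c, hcv, n, hc⟩

theorem IsLeafV.descendants_eq {v : V} (hv : IsLeafV par v) : descendants par v = {v} := by
  refine Set.eq_singleton_iff_unique_mem.2 ⟨mem_descendants_self v, fun u hu => ?_⟩
  rcases eq_or_mem_descendants_of_mem_children hu with rfl | ⟨c, hc, -⟩
  · rfl
  · rw [hv] at hc
    exact hc.elim

theorem mem_descendants_or_mem_descendants {u v w : V} (hv : u ∈ descendants par v)
    (hw : u ∈ descendants par w) : v ∈ descendants par w ∨ w ∈ descendants par v := by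
  obtain ⟨m, hm⟩ := hv
  obtain ⟨n, hn⟩ := hw
  rcases le_total m n with hmn | hnm
  · obtain ⟨k, rfl⟩ := Nat.exists_eq_add_of_le hmn
    rw [parIter_add, hm, Option.bind_some] at hn
    exact Or.inl ⟨k, hn⟩
  · obtain ⟨k, rfl⟩ := Nat.exists_eq_add_of_le hnm
    rw [parIter_add, hn, Option.bind_some] at hm
    exact Or.inr ⟨k, hm⟩

theorem IsDirectedTree.eq_of_mem_descendants_of_par_eq (hTree : IsDirectedTree par) {c d p : V}
    (hc : par c = some p) (hd : par d = some p) (h : c ∈ descendants par d) : c = d := by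
  obtain ⟨_ | n, hn⟩ := h
  · exact Option.some_injective _ hn
  · rw [parIter, hc, Option.bind_some] at hn
    have hcycle : parIter par (n + 1) p = some p := by
      rw [parIter_succ', hn, Option.bind_some, hd]
    exact absurd hcycle (hTree.acyclic p (n + 1) n.succ_pos)

theorem IsDirectedTree.pairwiseDisjoint_descendants (hTree : IsDirectedTree par) (v : V) :
    (children par v).PairwiseDisjoint (descendants par) := by
  refine fun c hc d hd hcd => Set.disjoint_left.2 fun u huc hud => hcd ?_
  rcases mem_descendants_or_mem_descendants huc hud with h | h
  · exact hTree.eq_of_mem_descendants_of_par_eq hc hd h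
  · exact (hTree.eq_of_mem_descendants_of_par_eq hd hc h).symm

theorem IsDirectedTree.tsum_children_tsum_descendants_le (hTree : IsDirectedTree par)
    (φ : V → ℝ≥0∞) (v : V) :
    ∑' c : children par v, ∑' u : descendants par c.1, φ u ≤ ∑' u : descendants par v, φ u := by
  rw [← ENNReal.tsum_biUnion' (hTree.pairwiseDisjoint_descendants v)]
  exact ENNReal.tsum_mono_subtype φ <| Set.iUnion₂_subset fun c hc u hu =>
    mem_descendants_trans hu (children_subset_descendants v hc)

/-- A grading of the tree: a labelling of the vertices by the index of their generation, up to a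
common shift. -/
def IsGrading (par : V → Option V) (gen : V → ℤ) : Prop :=
  ∀ u v : V, par v = some u → gen v = gen u + 1

theorem IsGrading.eq_add_of_parIter {gen : V → ℤ} (hgen : IsGrading par gen) {n : ℕ} {u v : V}
    (h : parIter par n u = some v) : gen u = gen v + n := by
  induction n generalizing u with
  | zero => rw [Option.some_injective _ h, Nat.cast_zero, add_zero]
  | succ n ih =>
    obtain ⟨w, hw, hwv⟩ := Option.bind_eq_some_iff.1 h
    rw [hgen w u hw, ih hwv, Nat.cast_succ, add_assoc]

theorem IsGrading.eq_of_mem_descendants {gen : V → ℤ} (hgen : IsGrading par gen) {u v : V}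
    (h : u ∈ descendants par v) (huv : gen u = gen v) : u = v := by
  obtain ⟨n, hn⟩ := h
  have := hgen.eq_add_of_parIter hn
  obtain rfl : n = 0 := by omega
  exact Option.some_injective _ hn

end Tree

section Boundary

variable {par : V → Option V}

theorem IsBranchFun.apply_sub {b : ℤ → Option V} (hb : IsBranchFun par b) (k : ℕ) {n : ℤ} {v : V}
    (h : b n = some v) : b (n - k) = parIter par k v := by
  obtain ⟨-, hpar, -, hconvex⟩ := hb
  induction k generalizing n v with
  | zero => rw [Nat.cast_zero, sub_zero, h, parIter]
  | succ k ih =>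
    have hpred := hpar n v h
    rw [Nat.cast_succ, add_comm (k : ℤ), ← sub_sub, parIter]
    cases hv : par v with
    | some u => exact ih (hpred.trans hv)
    | none =>
      by_contra hsome
      have := hconvex (n - 1 - k) (n - 1) n (by omega) (by omega)
        (Option.isSome_iff_ne_none.2 hsome) (Option.isSome_of_eq_some h)
      rw [hpred, hv] at this
      exact Bool.false_ne_true this

theorem mk_mem_boundaryThrough {b : {b : ℤ → Option V // IsBranchFun par b}} {v : V} :
    (Quotient.mk (branchSetoid par) b : TreeBoundary par) ∈ boundaryThrough par v ↔
      ∃ n : ℤ, b.1 n = some v := by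
  refine ⟨?_, fun h => ⟨b, rfl, h⟩⟩
  rintro ⟨c, hc, n, hn⟩
  obtain ⟨k, hk⟩ := Quotient.exact hc
  exact ⟨n - k, by rw [← hk, sub_add_cancel, hn]⟩

theorem measurableSet_boundaryThrough (par : V → Option V) (v : V) :
    MeasurableSet (boundaryThrough par v) :=
  MeasurableSpace.measurableSet_generateFrom ⟨v, rfl⟩

theorem boundaryThrough_subset_of_mem_descendants {u v : V} (h : v ∈ descendants par u) :
    boundaryThrough par v ⊆ boundaryThrough par u := by
  obtain ⟨k, hk⟩ := h
  rintro ⟨b⟩ hb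
  obtain ⟨n, hn⟩ := mk_mem_boundaryThrough.1 hb
  exact mk_mem_boundaryThrough.2 ⟨n - k, (b.2.apply_sub k hn).trans hk⟩

theorem mem_descendants_or_of_mem_boundaryThrough {u v : V} {ζ : TreeBoundary par}
    (hu : ζ ∈ boundaryThrough par u) (hv : ζ ∈ boundaryThrough par v) :
    u ∈ descendants par v ∨ v ∈ descendants par u := by
  obtain ⟨b⟩ := ζ
  obtain ⟨m, hm⟩ := mk_mem_boundaryThrough.1 hu
  obtain ⟨n, hn⟩ := mk_mem_boundaryThrough.1 hv
  rcases le_total m n with hmn | hnm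
  · obtain ⟨k, rfl⟩ := Int.le.dest hmn
    refine Or.inr ⟨k, ?_⟩
    rw [← b.2.apply_sub k hn, add_sub_cancel_right, hm]
  · obtain ⟨k, rfl⟩ := Int.le.dest hnm
    refine Or.inl ⟨k, ?_⟩
    rw [← b.2.apply_sub k hm, add_sub_cancel_right, hn]

theorem disjoint_boundaryThrough {u v : V} (huv : u ∉ descendants par v)
    (hvu : v ∉ descendants par u) :
    Disjoint (boundaryThrough par u) (boundaryThrough par v) :=
  Set.disjoint_left.2 fun _ hu hv =>
    (mem_descendants_or_of_mem_boundaryThrough hu hv).elim huv hvu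

theorem IsGrading.disjoint_boundaryThrough {gen : V → ℤ} (hgen : IsGrading par gen) {u v : V}
    (huv : u ≠ v) (h : gen u = gen v) :
    Disjoint (boundaryThrough par u) (boundaryThrough par v) :=
  PaperTree.disjoint_boundaryThrough (fun hu => huv (hgen.eq_of_mem_descendants hu h))
    fun hv => huv (hgen.eq_of_mem_descendants hv h.symm).symm

theorem IsLeafV.disjoint_boundaryThrough {u v : V} (hu : IsLeafV par u) (hv : IsLeafV par v)
    (huv : u ≠ v) : Disjoint (boundaryThrough par u) (boundaryThrough par v) :=
  PaperTree.disjoint_boundaryThrough (by rwa [hv.descendants_eq])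
    (by rw [hu.descendants_eq]; exact huv.symm)

theorem isPiSystem_boundaryThrough (par : V → Option V) :
    IsPiSystem {S : Set (TreeBoundary par) | ∃ v : V, S = boundaryThrough par v} := by
  rintro _ ⟨u, rfl⟩ _ ⟨v, rfl⟩ ⟨ζ, hu, hv⟩
  rcases mem_descendants_or_of_mem_boundaryThrough hu hv with h | h
  · exact ⟨u, Set.inter_eq_left.2 (boundaryThrough_subset_of_mem_descendants h)⟩
  · exact ⟨v, Set.inter_eq_right.2 (boundaryThrough_subset_of_mem_descendants h)⟩

theorem boundaryThrough_subset_iUnion_children {p : V} (hp : children par p ≠ ∅) :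
    boundaryThrough par p ⊆ ⋃ c ∈ children par p, boundaryThrough par c := by
  rintro ⟨b⟩ hb
  obtain ⟨n, hn⟩ := mk_mem_boundaryThrough.1 hb
  obtain ⟨c, hc⟩ := Option.isSome_iff_exists.1 (b.2.2.2.1 n p hn hp)
  have hcp : par c = some p := by
    rw [← b.2.2.1 _ c hc, add_sub_cancel_right, hn]
  exact Set.mem_biUnion hcp (mk_mem_boundaryThrough.2 ⟨n + 1, hc⟩)

/-- The parent of `v`, or `v` itself if `v` is the root: the parent map made total, so that its
iterates climb up to the root and stay there. -/
def parOrSelf (par : V → Option V) (v : V) : V :=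
  (par v).getD v

theorem mem_descendants_parOrSelf (v : V) : v ∈ descendants par (parOrSelf par v) := by
  unfold parOrSelf
  cases hv : par v with
  | none => exact mem_descendants_self v
  | some u => exact children_subset_descendants u hv

theorem iterate_parOrSelf_of_parIter {k : ℕ} {v w : V} (h : parIter par k v = some w) :
    (parOrSelf par)^[k] v = w := by
  induction k generalizing v with
  | zero => exact Option.some_injective _ h
  | succ k ih =>
    obtain ⟨u, hu, huw⟩ := Option.bind_eq_some_iff.1 h
    rw [Function.iterate_succ_apply, parOrSelf, hu, Option.getD_some, ih huw]

theorem monotone_boundaryThrough_iterate_parOrSelf (v : V) :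
    Monotone fun n => boundaryThrough par ((parOrSelf par)^[n] v) := by
  refine monotone_nat_of_le_succ fun n => ?_
  simp only [Function.iterate_succ_apply']
  exact boundaryThrough_subset_of_mem_descendants (mem_descendants_parOrSelf _)

theorem IsDirectedTree.iUnion_boundaryThrough_iterate_parOrSelf (hTree : IsDirectedTree par)
    (v : V) : ⋃ n, boundaryThrough par ((parOrSelf par)^[n] v) = Set.univ := by
  refine Set.eq_univ_of_forall ?_
  rintro ⟨b⟩
  obtain ⟨n, hn⟩ := b.2.1
  obtain ⟨u, hu⟩ := Option.isSome_iff_exists.1 hn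
  obtain ⟨m, k, w, hm, hk⟩ := hTree.connected u v
  have hw : (Quotient.mk _ b : TreeBoundary par) ∈ boundaryThrough par w :=
    mk_mem_boundaryThrough.2 ⟨n - m, (b.2.apply_sub m hu).trans hm⟩
  rw [← iterate_parOrSelf_of_parIter hk] at hw
  exact Set.mem_iUnion.2 ⟨k, hw⟩

/-- The chain through `v` (at index `0`) that runs upwards along `par` and downwards along `next`,
as a `ℤ`-indexed partial chain. -/
def followBranch (par next : V → Option V) (v : V) : ℤ → Option V
  | .ofNat n => parIter next n v
  | .negSucc n => parIter par (n + 1) v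

theorem followBranch_natCast (next : V → Option V) (v : V) (n : ℕ) :
    followBranch par next v n = parIter next n v :=
  rfl

theorem followBranch_neg_natCast (next : V → Option V) (v : V) (n : ℕ) :
    followBranch par next v (-n) = parIter par n v := by
  cases n <;> rfl

theorem followBranch_sub_one {next : V → Option V} (hnext : ∀ w c, next w = some c → par c = some w)
    {v w : V} {n : ℤ} (h : followBranch par next v n = some w) :
    followBranch par next v (n - 1) = par w := by
  obtain ⟨k, rfl | rfl⟩ := n.eq_nat_or_neg
  · rw [followBranch_natCast] at h
    cases k with
    | zero => rw [← Option.some_injective _ h]; exact parIter_one v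
    | succ k =>
      rw [parIter_succ', Option.bind_eq_some_iff] at h
      obtain ⟨x, hx, hxw⟩ := h
      rw [Nat.cast_succ, add_sub_cancel_right, followBranch_natCast, hx, hnext x w hxw]
  · rw [followBranch_neg_natCast] at h
    rw [← neg_add', ← Nat.cast_succ, followBranch_neg_natCast, parIter_succ', h, Option.bind_some]

theorem isSome_followBranch_add_one {next : V → Option V}
    (hnext : ∀ w, children par w ≠ ∅ → (next w).isSome) {v w : V} {n : ℤ}
    (h : followBranch par next v n = some w) (hw : children par w ≠ ∅) :
    (followBranch par next v (n + 1)).isSome := by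
  obtain ⟨k, rfl | rfl⟩ := n.eq_nat_or_neg
  · rw [followBranch_natCast] at h
    rw [← Nat.cast_succ, followBranch_natCast, parIter_succ', h]
    exact hnext w hw
  · cases k with
    | zero =>
      obtain rfl : v = w := Option.some_injective _ h
      exact (congrArg Option.isSome (parIter_one v)).trans (hnext v hw)
    | succ k =>
      rw [followBranch_neg_natCast] at h
      rw [Nat.cast_succ, neg_add, neg_add_cancel_right, followBranch_neg_natCast]
      exact isSome_parIter_of_le k.le_succ (Option.isSome_of_eq_some h)

theorem isSome_followBranch_of_le {next : V → Option V} {v : V} {a x c : ℤ} (hax : a ≤ x)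
    (hxc : x ≤ c) (ha : (followBranch par next v a).isSome)
    (hc : (followBranch par next v c).isSome) : (followBranch par next v x).isSome := by
  rcases le_total 0 x with hx | hx
  · lift x to ℕ using hx
    lift c to ℕ using (Int.natCast_nonneg x).trans hxc
    exact isSome_parIter_of_le (Int.ofNat_le.1 hxc) hc
  · obtain ⟨k, rfl⟩ := Int.exists_eq_neg_ofNat hx
    obtain ⟨l, rfl⟩ := Int.exists_eq_neg_ofNat (hax.trans hx)
    rw [followBranch_neg_natCast] at ha ⊢
    exact isSome_parIter_of_le (by omega) ha

theorem isBranchFun_followBranch {next : V → Option V}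
    (hnext : ∀ w c, next w = some c → par c = some w)
    (hleaf : ∀ w, children par w ≠ ∅ → (next w).isSome) (v : V) :
    IsBranchFun par (followBranch par next v) :=
  ⟨⟨0, rfl⟩, fun _ _ => followBranch_sub_one hnext,
    fun _ _ => isSome_followBranch_add_one hleaf, fun _ _ _ => isSome_followBranch_of_le⟩

theorem exists_mem_boundaryThrough_forall {P : V → Prop}
    (hP : ∀ w, P w → children par w ≠ ∅ → ∃ c ∈ children par w, P c) {v : V} (hv : P v) :
    ∃ ζ ∈ boundaryThrough par v,
      ∀ u, ζ ∈ boundaryThrough par u → P u ∨ v ∈ descendants par u := by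
  have hstep : ∀ w, ∃ o : Option V,
      (∀ c, o = some c → par c = some w ∧ (P w → P c)) ∧ (children par w ≠ ∅ → o.isSome) := by
    intro w
    by_cases hleaf : children par w = ∅
    · exact ⟨none, by simp, fun h => absurd hleaf h⟩
    · obtain ⟨c, hc, hPc⟩ : ∃ c ∈ children par w, P w → P c := by
        by_cases hPw : P w
        · obtain ⟨c, hc, hPc⟩ := hP w hPw hleaf
          exact ⟨c, hc, fun _ => hPc⟩
        · obtain ⟨c, hc⟩ := Set.nonempty_iff_ne_empty.2 hleaf
          exact ⟨c, hc, fun h => absurd h hPw⟩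
      exact ⟨some c, by rintro _ ⟨⟩; exact ⟨hc, hPc⟩, fun _ => rfl⟩
  choose next hnext hleaf using hstep
  have hbranch := isBranchFun_followBranch (fun w c h => (hnext w c h).1) hleaf v
  have hdown : ∀ (n : ℕ) (w : V), parIter next n v = some w → P w := by
    intro n
    induction n with
    | zero => exact fun w h => Option.some_injective _ h ▸ hv
    | succ n ih =>
      intro w h
      rw [parIter_succ', Option.bind_eq_some_iff] at h
      obtain ⟨x, hx, hxw⟩ := h
      exact (hnext x w hxw).2 (ih x hx)
  refine ⟨Quotient.mk _ ⟨_, hbranch⟩, mk_mem_boundaryThrough.2 ⟨0, rfl⟩, fun u hu => ?_⟩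
  obtain ⟨n, hn⟩ := mk_mem_boundaryThrough.1 hu
  obtain ⟨k, rfl | rfl⟩ := n.eq_nat_or_neg
  · exact Or.inl (hdown k u hn)
  · exact Or.inr ⟨k, (followBranch_neg_natCast next v k).symm.trans hn⟩

end Boundary

section Uniqueness

variable {par : V → Option V} {M : Type*} [AddCommGroup M] [TopologicalSpace M] [T2Space M]

theorem IsDirectedTree.vectorMeasure_ext [Nonempty V] (hTree : IsDirectedTree par)
    {m₁ m₂ : VectorMeasure (TreeBoundary par) M}
    (h : ∀ v, m₁ (boundaryThrough par v) = m₂ (boundaryThrough par v)) : m₁ = m₂ := by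
  obtain ⟨v₀⟩ := ‹Nonempty V›
  have hlim (m : VectorMeasure (TreeBoundary par) M) :
      Tendsto (fun n => m (boundaryThrough par ((parOrSelf par)^[n] v₀))) atTop
        (𝓝 (m Set.univ)) := by
    rw [← hTree.iUnion_boundaryThrough_iterate_parOrSelf v₀]
    exact m.tendsto_vectorMeasure_iUnion_atTop_nat
      (monotone_boundaryThrough_iterate_parOrSelf v₀) fun n => measurableSet_boundaryThrough par _
  refine VectorMeasure.ext_of_generateFrom _ ?_ rfl (isPiSystem_boundaryThrough par) ?_
  · rintro _ ⟨v, rfl⟩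
    exact h v
  · exact tendsto_nhds_unique ((hlim m₁).congr fun n => h _) (hlim m₂)

end Uniqueness

section Variation

variable {X : Type*} [MeasurableSpace X] {E : Type*} [NormedAddCommGroup E]

theorem tsum_enorm_le_variation_univ {ι : Type*} (m : VectorMeasure X E) {s : ι → Set X}
    (hs : ∀ i, MeasurableSet (s i)) (hd : Pairwise (Function.onFun Disjoint s)) :
    ∑' i, ‖m (s i)‖ₑ ≤ m.variation Set.univ :=
  calc ∑' i, ‖m (s i)‖ₑ ≤ ∑' i, m.variation (s i) :=
        ENNReal.tsum_le_tsum fun i => m.enorm_measure_le_variation (s i)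
    _ ≤ m.variation Set.univ :=
        tsum_measure_le_measure_univ (fun i => (hs i).nullMeasurableSet)
          fun _ _ hij => (hd hij).aedisjoint

theorem isFiniteMeasure_variation [NormedSpace ℝ E] [FiniteDimensional ℝ E]
    (m : VectorMeasure X E) : IsFiniteMeasure m.variation := by
  let b := Module.finBasis ℝ E
  let coord (i) : SignedMeasure X :=
    m.mapRange (b.coord i : E →+ ℝ) (b.coord i).continuous_of_finiteDimensional
  refine isFiniteMeasure_of_le (∑ i, ‖b i‖₊ • (coord i).totalVariation)
    (VectorMeasure.variation_le_of_forall_enorm_le fun s _ => ?_)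
  calc ‖m s‖ₑ = ‖∑ i, coord i s • b i‖ₑ := by
        conv_lhs => rw [← b.sum_repr (m s)]
        rfl
    _ ≤ ∑ i, ‖coord i s • b i‖ₑ := enorm_sum_le _ _
    _ ≤ ∑ i, ‖b i‖ₑ * (coord i).totalVariation s := by
        gcongr with i
        rw [enorm_smul, mul_comm]
        gcongr
        exact (coord i).enorm_le_totalVariation s
    _ = (∑ i, ‖b i‖₊ • (coord i).totalVariation) s := by
        simp only [Measure.finsetSum_apply, Measure.smul_apply, ENNReal.smul_def, smul_eq_mul,
          enorm_eq_nnnorm]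

variable {par : V → Option V}

theorem IsGrading.tsum_enorm_le_variation_univ {gen : V → ℤ} (hgen : IsGrading par gen)
    (m : VectorMeasure (TreeBoundary par) E) (n : ℤ) :
    ∑' v : {v : V // gen v = n}, ‖m (boundaryThrough par v)‖ₑ ≤ m.variation Set.univ :=
  PaperTree.tsum_enorm_le_variation_univ m (fun v => measurableSet_boundaryThrough par v)
    fun u v huv => hgen.disjoint_boundaryThrough (Subtype.coe_injective.ne huv)
      (u.2.trans v.2.symm)

theorem tsum_leaves_enorm_le_variation_univ (m : VectorMeasure (TreeBoundary par) E) :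
    ∑' v : {v : V // IsLeafV par v}, ‖m (boundaryThrough par v)‖ₑ ≤ m.variation Set.univ :=
  tsum_enorm_le_variation_univ m (fun v => measurableSet_boundaryThrough par v)
    fun u v huv => u.2.disjoint_boundaryThrough v.2 (Subtype.coe_injective.ne huv)

end Variation

section CoverOuterMeasure

variable {α ι : Type*} {s : ι → Set α} {w : ι → ℝ≥0∞}

/-- The outer measure generated by weights `w i` attached to sets `s i`: the outer measure of `A`
is the infimum of the total weights of the subfamilies covering `A`. -/
noncomputable def coverOuterMeasure (s : ι → Set α) (w : ι → ℝ≥0∞) : OuterMeasure α where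
  measureOf A := ⨅ (S : Set ι) (_ : A ⊆ ⋃ i ∈ S, s i), ∑' i : S, w i
  empty := le_antisymm (iInf₂_le_of_le ∅ (Set.empty_subset _) (by simp)) zero_le
  mono hAB := le_iInf₂ fun S hS => iInf₂_le S (hAB.trans hS)
  iUnion_nat A _ := by
    refine ENNReal.le_of_forall_pos_le_add fun ε hε hfin => ?_
    obtain ⟨δ, hδ, hδε⟩ := ENNReal.exists_pos_sum_of_countable' (ENNReal.coe_pos.2 hε).ne' ℕ
    have hcover (n : ℕ) : ∃ S : Set ι, A n ⊆ ⋃ i ∈ S, s i ∧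
        ∑' i : S, w i ≤ (⨅ (S : Set ι) (_ : A n ⊆ ⋃ i ∈ S, s i), ∑' i : S, w i) + δ n := by
      have hlt := ENNReal.lt_add_right (ENNReal.ne_top_of_tsum_ne_top hfin.ne n) (hδ n).ne'
      obtain ⟨S, hS⟩ := iInf_lt_iff.1 hlt
      obtain ⟨hAS, hS⟩ := iInf_lt_iff.1 hS
      exact ⟨S, hAS, hS.le⟩
    choose S hAS hS using hcover
    refine iInf₂_le_of_le (⋃ n, S n) ?_ ?_
    · rw [Set.biUnion_iUnion]
      exact Set.iUnion_mono hAS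
    · calc ∑' i : ⋃ n, S n, w i ≤ ∑' n, ∑' i : S n, w i := ENNReal.tsum_iUnion_le_tsum w S
        _ ≤ ∑' n, ((⨅ (S : Set ι) (_ : A n ⊆ ⋃ i ∈ S, s i), ∑' i : S, w i) + δ n) :=
          ENNReal.tsum_le_tsum hS
        _ ≤ _ := by
          rw [ENNReal.tsum_add]
          gcongr

theorem coverOuterMeasure_le_tsum {A : Set α} {S : Set ι} (h : A ⊆ ⋃ i ∈ S, s i) :
    coverOuterMeasure s w A ≤ ∑' i : S, w i :=
  iInf₂_le S h

theorem le_coverOuterMeasure {A : Set α} {r : ℝ≥0∞}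
    (h : ∀ S : Set ι, A ⊆ ⋃ i ∈ S, s i → r ≤ ∑' i : S, w i) : r ≤ coverOuterMeasure s w A :=
  le_iInf₂ h

theorem coverOuterMeasure_le (i : ι) : coverOuterMeasure s w (s i) ≤ w i :=
  (coverOuterMeasure_le_tsum (S := {i}) (by simp)).trans_eq (tsum_singleton i w)

theorem isCaratheodory_coverOuterMeasure [Countable ι] {t : Set α}
    (ht : ∀ i, coverOuterMeasure s w (s i ∩ t) + coverOuterMeasure s w (s i \ t) ≤ w i) :
    (coverOuterMeasure s w).IsCaratheodory t := by
  refine (OuterMeasure.isCaratheodory_iff_le' _).2 fun A => le_coverOuterMeasure fun S hS => ?_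
  have hinter : A ∩ t ⊆ ⋃ i ∈ S, s i ∩ t := by
    rw [← Set.iUnion₂_inter]
    exact Set.inter_subset_inter_left t hS
  have hdiff : A \ t ⊆ ⋃ i ∈ S, s i \ t := by
    simp only [Set.sdiff_eq, ← Set.iUnion₂_inter]
    exact Set.inter_subset_inter_left tᶜ hS
  calc coverOuterMeasure s w (A ∩ t) + coverOuterMeasure s w (A \ t)
      ≤ ∑' i : S, coverOuterMeasure s w (s i ∩ t) + ∑' i : S, coverOuterMeasure s w (s i \ t) :=
        add_le_add ((measure_mono hinter).trans (measure_biUnion_le _ S.to_countable _))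
          ((measure_mono hdiff).trans (measure_biUnion_le _ S.to_countable _))
    _ = ∑' i : S, (coverOuterMeasure s w (s i ∩ t) + coverOuterMeasure s w (s i \ t)) :=
        ENNReal.tsum_add.symm
    _ ≤ ∑' i : S, w i := ENNReal.tsum_le_tsum fun i => ht i

end CoverOuterMeasure

section Flow

variable {par : V → Option V}

/-- A flow with values in a topological additive monoid: the value at a non-leaf is the
unconditional sum of the values at its children. -/
def IsFlow {M : Type*} [AddCommMonoid M] [TopologicalSpace M] (par : V → Option V) (f : V → M) :
    Prop :=
  ∀ v : V, children par v ≠ ∅ → HasSum (fun u : children par v => f u.1) (f v)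

variable {g : V → ℝ≥0∞}

theorem IsFlow.le_of_mem_descendants (hg : IsFlow par g) {u v : V} (h : v ∈ descendants par u) :
    g v ≤ g u := by
  obtain ⟨n, hn⟩ := h
  induction n generalizing v with
  | zero => rw [Option.some_injective _ hn]
  | succ n ih =>
    obtain ⟨p, hp, hpu⟩ := Option.bind_eq_some_iff.1 hn
    have hsum := hg p (Set.nonempty_iff_ne_empty.1 ⟨v, hp⟩)
    calc g v ≤ ∑' c : children par p, g c := ENNReal.le_tsum (⟨v, hp⟩ : children par p)
      _ = g p := hsum.tsum_eq
      _ ≤ g u := ih hpu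

theorem IsFlow.le_tsum_of_boundaryThrough_subset (hg : IsFlow par g) (hTree : IsDirectedTree par)
    {v : V} {S : Set V} (hS : boundaryThrough par v ⊆ ⋃ u ∈ S, boundaryThrough par u) :
    g v ≤ ∑' u : S, g u := by
  by_contra! hlt
  let cost (w : V) : ℝ≥0∞ := ∑' u : descendants par w, S.indicator g u
  have hcost : cost v < g v := by
    refine lt_of_le_of_lt ?_ hlt
    rw [tsum_subtype S g]
    exact ENNReal.tsum_comp_le_tsum_of_injective Subtype.coe_injective _
  -- A vertex that is not paid for by the members of `S` below it has such a child.
  have hdescend (w : V) (hw : cost w < g w) (hleaf : children par w ≠ ∅) :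
      ∃ c ∈ children par w, cost c < g c := by
    by_contra! hpaid
    refine hw.not_ge ?_
    calc g w = ∑' c : children par w, g c := (hg w hleaf).tsum_eq.symm
      _ ≤ ∑' c : children par w, cost c := ENNReal.tsum_le_tsum fun c => hpaid c c.2
      _ ≤ cost w := hTree.tsum_children_tsum_descendants_le _ w
  obtain ⟨ζ, hζ, hunpaid⟩ := exists_mem_boundaryThrough_forall hdescend hcost
  obtain ⟨u, huS, hζu⟩ := Set.mem_iUnion₂.1 (hS hζ)
  rcases hunpaid u hζu with hu | hvu
  · refine hu.not_ge ?_
    calc g u = S.indicator g u := (Set.indicator_of_mem huS g).symm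
      _ ≤ cost u := ENNReal.le_tsum (⟨u, mem_descendants_self u⟩ : descendants par u)
  · exact hlt.not_ge ((hg.le_of_mem_descendants hvu).trans (ENNReal.le_tsum (⟨u, huS⟩ : S)))

theorem IsFlow.coverOuterMeasure_boundaryThrough (hg : IsFlow par g)
    (hTree : IsDirectedTree par) (v : V) :
    coverOuterMeasure (boundaryThrough par) g (boundaryThrough par v) = g v :=
  (coverOuterMeasure_le v).antisymm <| le_coverOuterMeasure fun _ hS =>
    hg.le_tsum_of_boundaryThrough_subset hTree hS

theorem IsFlow.add_coverOuterMeasure_sdiff_child_le (hg : IsFlow par g) {p c : V}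
    (hc : c ∈ children par p) :
    g c + coverOuterMeasure (boundaryThrough par) g (boundaryThrough par p \ boundaryThrough par c)
      ≤ g p := by
  have hp : children par p ≠ ∅ := Set.nonempty_iff_ne_empty.1 ⟨c, hc⟩
  have hdiff : boundaryThrough par p \ boundaryThrough par c ⊆
      ⋃ d ∈ children par p \ {c}, boundaryThrough par d := by
    rintro ζ ⟨hζp, hζc⟩
    obtain ⟨d, hd, hζd⟩ := Set.mem_iUnion₂.1 (boundaryThrough_subset_iUnion_children hp hζp)
    exact Set.mem_biUnion ⟨hd, fun h => hζc (h ▸ hζd)⟩ hζd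
  calc g c + coverOuterMeasure (boundaryThrough par) g
        (boundaryThrough par p \ boundaryThrough par c)
      ≤ ∑' d : ({c} : Set V), g d + ∑' d : ↥(children par p \ {c}), g d :=
        add_le_add (tsum_singleton c g).ge (coverOuterMeasure_le_tsum hdiff)
    _ = ∑' d : children par p, g d := by
        rw [← ENNReal.summable.tsum_union_disjoint Set.disjoint_sdiff_right ENNReal.summable,
          Set.union_sdiff_cancel (Set.singleton_subset_iff.2 hc)]
    _ = g p := (hg p hp).tsum_eq

theorem IsFlow.add_coverOuterMeasure_sdiff_le (hg : IsFlow par g) {u v : V}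
    (h : v ∈ descendants par u) :
    g v + coverOuterMeasure (boundaryThrough par) g (boundaryThrough par u \ boundaryThrough par v)
      ≤ g u := by
  obtain ⟨n, hn⟩ := h
  induction n generalizing v with
  | zero => rw [Option.some_injective _ hn, Set.sdiff_self, measure_empty, add_zero]
  | succ n ih =>
    obtain ⟨p, hp, hpu⟩ := Option.bind_eq_some_iff.1 hn
    calc g v + coverOuterMeasure (boundaryThrough par) g
          (boundaryThrough par u \ boundaryThrough par v)
        ≤ g v + (coverOuterMeasure (boundaryThrough par) g
              (boundaryThrough par p \ boundaryThrough par v)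
            + coverOuterMeasure (boundaryThrough par) g
              (boundaryThrough par u \ boundaryThrough par p)) := by
          gcongr
          refine (measure_mono ?_).trans (measure_union_le _ _)
          rw [Set.union_comm]
          exact sdiff_triangle _ _ _
      _ ≤ g p + coverOuterMeasure (boundaryThrough par) g
            (boundaryThrough par u \ boundaryThrough par p) := by
          rw [← add_assoc]
          gcongr
          exact hg.add_coverOuterMeasure_sdiff_child_le hp
      _ ≤ g u := ih hpu

theorem IsFlow.isCaratheodory_boundaryThrough [Countable V] (hg : IsFlow par g) (v : V) :
    (coverOuterMeasure (boundaryThrough par) g).IsCaratheodory (boundaryThrough par v) := by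
  refine isCaratheodory_coverOuterMeasure fun u => ?_
  by_cases huv : u ∈ descendants par v
  · have hsub := boundaryThrough_subset_of_mem_descendants huv
    rw [Set.inter_eq_left.2 hsub, Set.sdiff_eq_empty.2 hsub, measure_empty, add_zero]
    exact coverOuterMeasure_le u
  by_cases hvu : v ∈ descendants par u
  · rw [Set.inter_eq_right.2 (boundaryThrough_subset_of_mem_descendants hvu)]
    exact (add_le_add_left (coverOuterMeasure_le v) _).trans (hg.add_coverOuterMeasure_sdiff_le hvu)
  · have hdisj := disjoint_boundaryThrough huv hvu
    rw [hdisj.inter_eq, hdisj.sdiff_eq_left, measure_empty, zero_add]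
    exact coverOuterMeasure_le u

theorem IsFlow.exists_measure (hg : IsFlow par g) (hTree : IsDirectedTree par) :
    ∃ μ : Measure (TreeBoundary par), ∀ v, μ (boundaryThrough par v) = g v := by
  have := hTree.countable
  refine ⟨(coverOuterMeasure (boundaryThrough par) g).toMeasure
    (MeasurableSpace.generateFrom_le ?_), fun v => ?_⟩
  · rintro _ ⟨v, rfl⟩
    exact hg.isCaratheodory_boundaryThrough v
  · rw [toMeasure_apply _ _ (measurableSet_boundaryThrough par v),
      hg.coverOuterMeasure_boundaryThrough hTree]

theorem IsDirectedTree.measure_univ_le [Nonempty V] (hTree : IsDirectedTree par)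
    {μ : Measure (TreeBoundary par)} {C : ℝ≥0∞} (h : ∀ v, μ (boundaryThrough par v) ≤ C) :
    μ Set.univ ≤ C := by
  obtain ⟨v₀⟩ := ‹Nonempty V›
  rw [← hTree.iUnion_boundaryThrough_iterate_parOrSelf v₀,
    (monotone_boundaryThrough_iterate_parOrSelf v₀).measure_iUnion]
  exact iSup_le fun n => h _

end Flow

section FlowVariation

variable {par : V → Option V} {E : Type*} [NormedAddCommGroup E] {f : V → E}

/-- The variation of `f` below a vertex, resolved by `n` generations: each vertex is replaced by its
children `n` times, except that leaves are kept, and the norms of the values of `f` are summed. -/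
noncomputable def levelVariation (par : V → Option V) (f : V → E) : ℕ → V → ℝ≥0∞
  | 0, v => ‖f v‖ₑ
  | n + 1, v =>
    if IsLeafV par v then ‖f v‖ₑ else ∑' c : children par v, levelVariation par f n c

/-- The total variation of `f` below a vertex: for the flow `v ↦ m (∂T_v)` of a measure `m` on the
boundary, it is the variation of `m` on `∂T_v`. -/
noncomputable def flowVariation (par : V → Option V) (f : V → E) (v : V) : ℝ≥0∞ :=
  ⨆ n, levelVariation par f n v

theorem IsLeafV.levelVariation {v : V} (hv : IsLeafV par v) (n : ℕ) :
    levelVariation par f n v = ‖f v‖ₑ := by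
  cases n with
  | zero => rfl
  | succ n => exact if_pos hv

theorem levelVariation_succ {v : V} (hv : children par v ≠ ∅) (n : ℕ) :
    levelVariation par f (n + 1) v = ∑' c : children par v, levelVariation par f n c :=
  if_neg hv

theorem enorm_le_flowVariation (f : V → E) (v : V) : ‖f v‖ₑ ≤ flowVariation par f v :=
  le_iSup (fun n => levelVariation par f n v) 0

theorem IsFlow.monotone_levelVariation (hf : IsFlow par f) (v : V) :
    Monotone fun n => levelVariation par f n v := by
  refine monotone_nat_of_le_succ fun n => ?_
  induction n generalizing v with
  | zero =>
    by_cases hv : IsLeafV par v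
    · rw [hv.levelVariation, hv.levelVariation]
    · rw [levelVariation_succ hv]
      calc ‖f v‖ₑ = ‖∑' c : children par v, f c‖ₑ := by rw [(hf v hv).tsum_eq]
        _ ≤ ∑' c : children par v, ‖f c‖ₑ := enorm_tsum_le_tsum_enorm
  | succ n ih =>
    by_cases hv : IsLeafV par v
    · rw [hv.levelVariation, hv.levelVariation]
    · rw [levelVariation_succ hv, levelVariation_succ hv]
      exact ENNReal.tsum_le_tsum fun c => ih c

theorem tsum_iSup_of_monotone {ι : Type*} {a : ι → ℕ → ℝ≥0∞} (ha : ∀ i, Monotone (a i)) :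
    ∑' i, ⨆ n, a i n = ⨆ n, ∑' i, a i n := by
  simp only [ENNReal.tsum_eq_iSup_sum, ENNReal.finsetSum_iSup_of_monotone ha]
  exact iSup_comm

theorem IsFlow.isFlow_flowVariation (hf : IsFlow par f) : IsFlow par (flowVariation par f) := by
  intro v hv
  have hsum : ∑' c : children par v, flowVariation par f c =
      flowVariation par f v :=
    calc ∑' c : children par v, ⨆ n, levelVariation par f n c
        = ⨆ n, ∑' c : children par v, levelVariation par f n c :=
          tsum_iSup_of_monotone fun c => hf.monotone_levelVariation c
      _ = ⨆ n, levelVariation par f (n + 1) v := by simp only [levelVariation_succ hv]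
      _ = ⨆ n, levelVariation par f n v := (hf.monotone_levelVariation v).iSup_nat_add 1
  exact hsum ▸ ENNReal.summable.hasSum

variable {gen : V → ℤ}

theorem IsGrading.levelVariation_le_tsum_descendants (hTree : IsDirectedTree par)
    (hgen : IsGrading par gen) (f : V → E) (n : ℕ) (v : V) :
    levelVariation par f n v ≤ ∑' u : descendants par v,
      {u | IsLeafV par u ∨ gen u = gen v + n}.indicator (fun u => ‖f u‖ₑ) u := by
  have hself {v : V} {A : Set V} (hA : v ∈ A) :
      ‖f v‖ₑ ≤ ∑' u : descendants par v, A.indicator (fun u => ‖f u‖ₑ) u := by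
    rw [← Set.indicator_of_mem hA fun u => ‖f u‖ₑ]
    exact ENNReal.le_tsum (⟨v, mem_descendants_self v⟩ : descendants par v)
  induction n generalizing v with
  | zero => exact hself (Or.inr (by simp))
  | succ n ih =>
    by_cases hv : IsLeafV par v
    · rw [hv.levelVariation]
      exact hself (Or.inl hv)
    · rw [levelVariation_succ hv]
      refine le_trans (ENNReal.tsum_le_tsum fun c => ?_)
        (hTree.tsum_children_tsum_descendants_le _ v)
      have hc : gen c + n = gen v + (n + 1 : ℕ) := by
        rw [hgen v c c.2, Nat.cast_succ]
        ring
      rw [← hc]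
      exact ih c

theorem IsGrading.levelVariation_le (hTree : IsDirectedTree par) (hgen : IsGrading par gen)
    (f : V → E) (n : ℕ) (v : V) :
    levelVariation par f n v ≤ (∑' u : {u : V // IsLeafV par u}, ‖f u‖ₑ) +
      ∑' u : {u : V // gen u = gen v + n}, ‖f u‖ₑ :=
  calc levelVariation par f n v
      ≤ ∑' u : descendants par v,
          {u | IsLeafV par u ∨ gen u = gen v + n}.indicator (fun u => ‖f u‖ₑ) u :=
        hgen.levelVariation_le_tsum_descendants hTree f n v
    _ ≤ ∑' u, {u | IsLeafV par u ∨ gen u = gen v + n}.indicator (fun u => ‖f u‖ₑ) u :=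
        ENNReal.tsum_comp_le_tsum_of_injective Subtype.coe_injective _
    _ = ∑' u : ↥({u | IsLeafV par u} ∪ {u | gen u = gen v + n}), ‖f u‖ₑ :=
        (tsum_subtype _ _).symm
    _ ≤ _ := ENNReal.tsum_union_le (fun u => ‖f u‖ₑ) _ _

theorem IsFlow.flowVariation_le (hf : IsFlow par f) (hTree : IsDirectedTree par)
    (hgen : IsGrading par gen) (v : V) :
    flowVariation par f v ≤ (∑' u : {u : V // IsLeafV par u}, ‖f u‖ₑ) +
      ⨆ n : ℕ, ∑' u : {u : V // gen u = n}, ‖f u‖ₑ := by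
  refine iSup_le fun n => ?_
  -- Refining further reaches a generation of nonnegative index.
  obtain ⟨k, hk⟩ : ∃ k : ℕ, gen v + ((n + (gen v).natAbs : ℕ) : ℤ) = k :=
    Int.eq_ofNat_of_zero_le (by omega)
  calc levelVariation par f n v
      ≤ levelVariation par f (n + (gen v).natAbs) v :=
        hf.monotone_levelVariation v (Nat.le_add_right n _)
    _ ≤ (∑' u : {u : V // IsLeafV par u}, ‖f u‖ₑ) +
          ∑' u : {u : V // gen u = gen v + (n + (gen v).natAbs : ℕ)}, ‖f u‖ₑ :=
        hgen.levelVariation_le hTree f _ v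
    _ ≤ _ := by
        rw [hk]
        gcongr
        exact le_iSup (fun n : ℕ => ∑' u : {u : V // gen u = n}, ‖f u‖ₑ) k

end FlowVariation

section Existence

variable {par : V → Option V}

theorem IsFlow.map {M N : Type*} [AddCommMonoid M] [TopologicalSpace M] [AddCommMonoid N]
    [TopologicalSpace N] {f : V → M} (hf : IsFlow par f) (φ : M →+ N) (hφ : Continuous φ) :
    IsFlow par fun v => φ (f v) :=
  fun v hv => (hf v hv).map φ hφ

theorem IsFlow.toReal {g : V → ℝ≥0∞} (hg : IsFlow par g) (hfin : ∀ v, g v ≠ ⊤) :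
    IsFlow par fun v => (g v).toReal := by
  intro v hv
  dsimp only
  rw [← (hg v hv).tsum_eq, ENNReal.tsum_toReal_eq fun c : children par v => hfin c]
  exact ENNReal.hasSum_toReal ((hg v hv).tsum_eq ▸ hfin v)

theorem IsFlow.ofReal {r : V → ℝ} (hr : IsFlow par r) (hpos : ∀ v, 0 ≤ r v) :
    IsFlow par fun v => ENNReal.ofReal (r v) := by
  intro v hv
  dsimp only
  rw [← (hr v hv).tsum_eq,
    ENNReal.ofReal_tsum_of_nonneg (fun c : children par v => hpos c) (hr v hv).summable]
  exact ENNReal.summable.hasSum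

theorem IsFlow.const_mul {g : V → ℝ≥0∞} (hg : IsFlow par g) (C : ℝ≥0∞) :
    IsFlow par fun v => C * g v := by
  intro v hv
  dsimp only
  rw [← (hg v hv).tsum_eq, ← ENNReal.tsum_mul_left]
  exact ENNReal.summable.hasSum

variable [Nonempty V]

theorem IsFlow.exists_finite_measure {g : V → ℝ≥0∞} (hg : IsFlow par g)
    (hTree : IsDirectedTree par) {C : ℝ≥0∞} (hC : C ≠ ⊤) (hgC : ∀ v, g v ≤ C) :
    ∃ μ : Measure (TreeBoundary par), IsFiniteMeasure μ ∧
      ∀ v, μ (boundaryThrough par v) = g v := by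
  obtain ⟨μ, hμ⟩ := hg.exists_measure hTree
  exact ⟨μ, ⟨(hTree.measure_univ_le fun v => (hμ v).trans_le (hgC v)).trans_lt hC.lt_top⟩, hμ⟩

theorem IsFlow.exists_signedMeasure {r : V → ℝ} (hr : IsFlow par r) (hTree : IsDirectedTree par)
    {g : V → ℝ≥0∞} (hg : IsFlow par g) {C : ℝ≥0∞} (hC : C ≠ ⊤) (hgC : ∀ v, g v ≤ C)
    (hrg : ∀ v, ‖r v‖ₑ ≤ g v) :
    ∃ m : SignedMeasure (TreeBoundary par), ∀ v, m (boundaryThrough par v) = r v := by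
  have hfin (v : V) : g v ≠ ⊤ := ne_top_of_le_ne_top hC (hgC v)
  have habs (v : V) : |r v| ≤ (g v).toReal := by
    rw [← Real.norm_eq_abs, ← toReal_enorm]
    exact ENNReal.toReal_mono (hfin v) (hrg v)
  have hpos (v : V) : 0 ≤ (g v).toReal + r v := by linarith [neg_abs_le (r v), habs v]
  have hflow : IsFlow par fun v => ENNReal.ofReal ((g v).toReal + r v) :=
    IsFlow.ofReal (fun v hv => (hg.toReal hfin v hv).add (hr v hv)) hpos
  have hbound (v : V) : ENNReal.ofReal ((g v).toReal + r v) ≤ C + C :=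
    calc ENNReal.ofReal ((g v).toReal + r v)
        ≤ ENNReal.ofReal ((g v).toReal + (g v).toReal) :=
          ENNReal.ofReal_le_ofReal (by linarith [le_abs_self (r v), habs v])
      _ = g v + g v := by
          rw [ENNReal.ofReal_add ENNReal.toReal_nonneg ENNReal.toReal_nonneg,
            ENNReal.ofReal_toReal (hfin v)]
      _ ≤ C + C := add_le_add (hgC v) (hgC v)
  obtain ⟨μ, _, hμ⟩ := hg.exists_finite_measure hTree hC hgC
  obtain ⟨ν, _, hν⟩ := hflow.exists_finite_measure hTree (ENNReal.add_ne_top.2 ⟨hC, hC⟩) hbound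
  refine ⟨ν.toSignedMeasure - μ.toSignedMeasure, fun v => ?_⟩
  rw [Measure.toSignedMeasure_sub_apply (measurableSet_boundaryThrough par v), measureReal_def,
    measureReal_def, hμ, hν, ENNReal.toReal_ofReal (hpos v), add_sub_cancel_left]

variable {E : Type*} [NormedAddCommGroup E] [NormedSpace ℝ E] [FiniteDimensional ℝ E]

theorem IsFlow.exists_vectorMeasure {f : V → E} (hf : IsFlow par f) (hTree : IsDirectedTree par)
    {g : V → ℝ≥0∞} (hg : IsFlow par g) {C : ℝ≥0∞} (hC : C ≠ ⊤) (hgC : ∀ v, g v ≤ C)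
    (hfg : ∀ v, ‖f v‖ₑ ≤ g v) :
    ∃ m : VectorMeasure (TreeBoundary par) E, ∀ v, m (boundaryThrough par v) = f v := by
  let b := Module.finBasis ℝ E
  have hcoord (i) : ∃ m : SignedMeasure (TreeBoundary par),
      ∀ v, m (boundaryThrough par v) = b.coord i (f v) := by
    let φ : StrongDual ℝ E := (b.coord i).toContinuousLinearMap
    refine (hf.map (φ : E →+ ℝ) φ.continuous).exists_signedMeasure hTree (hg.const_mul ‖φ‖ₑ)
      (ENNReal.mul_ne_top enorm_ne_top hC) (fun v => mul_le_mul_right (hgC v) _) fun v => ?_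
    exact (φ.le_opENorm (f v)).trans (mul_le_mul_right (hfg v) _)
  choose m hm using hcoord
  refine ⟨∑ i, (m i).mapRange (LinearMap.toSpanSingleton ℝ E (b i) : ℝ →+ E)
    (LinearMap.continuous_of_finiteDimensional _), fun v => ?_⟩
  rw [FunLike.coe_sum, Finset.sum_apply, ← b.sum_repr (f v)]
  exact Finset.sum_congr rfl fun i _ => congrArg (· • b i) (hm i v)

end Existence

theorem statement19_general {E : Type*} [NormedAddCommGroup E] [NormedSpace ℝ E]
    [FiniteDimensional ℝ E] {V : Type*} [Nonempty V] {par : V → Option V}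
    (hTree : IsDirectedTree par) {gen : V → ℤ} (hgen : IsGrading par gen) {f : V → E}
    (hf : IsFlow par f) :
    ((∃ m : VectorMeasure (TreeBoundary par) E, ∀ v, m (boundaryThrough par v) = f v) ↔
      (∑' v : {v : V // IsLeafV par v}, ‖f v‖ₑ) < ⊤ ∧
        (⨆ n : ℕ, ∑' v : {v : V // gen v = n}, ‖f v‖ₑ) < ⊤) ∧
    ∀ m₁ m₂ : VectorMeasure (TreeBoundary par) E, (∀ v, m₁ (boundaryThrough par v) = f v) →
      (∀ v, m₂ (boundaryThrough par v) = f v) → m₁ = m₂ := by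
  refine ⟨⟨?_, ?_⟩, fun m₁ m₂ h₁ h₂ => hTree.vectorMeasure_ext fun v => (h₁ v).trans (h₂ v).symm⟩
  · rintro ⟨m, hm⟩
    have := isFiniteMeasure_variation m
    simp only [← hm]
    exact ⟨(tsum_leaves_enorm_le_variation_univ m).trans_lt (measure_lt_top _ _),
      (iSup_le fun n : ℕ => hgen.tsum_enorm_le_variation_univ m n).trans_lt (measure_lt_top _ _)⟩
  · rintro ⟨hleaves, hgens⟩
    exact hf.exists_vectorMeasure hTree hf.isFlow_flowVariation
      (ENNReal.add_ne_top.2 ⟨hleaves.ne, hgens.ne⟩) (hf.flowVariation_le hTree hgen)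
      (enorm_le_flowVariation f)

/-- Proposition 11.4 / `p-miflows`: a flow `f` on a directed tree is
induced by a (finite) `𝕜`-valued Borel measure on the boundary `∂T` if and only if
`∑_{v ∈ L(V)} |f v| < ∞` and `sup_{n ≥ 0} ∑_{v ∈ gen_n} |f v| < ∞`; and in that case the
measure is uniquely determined by `f`. -/
theorem statement19
    {𝕜 : Type*} [RCLike 𝕜] {V : Type*} (par : V → Option V) (hTree : IsDirectedTree par)
    -- generations (for rooted trees the root lies in generation 0; for unrooted trees
    -- they are enumerated with respect to a fixed vertex in generation 0)
    (gen : V → ℤ) (hgen : ∀ u v : V, par v = some u → gen v = gen u + 1)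
    (hgenroot : ∀ r : V, IsRoot par r → gen r = 0) (hgen0 : ∃ v₀ : V, gen v₀ = 0)
    -- `f` is a flow
    (f : V → 𝕜)
    (hflow : ∀ v : V, children par v ≠ ∅ →
      HasSum (fun u : ↥(children par v) => f u.1) (f v)) :
    ((∃ m : MeasureTheory.VectorMeasure (TreeBoundary par) 𝕜,
        ∀ v : V, m (boundaryThrough par v) = f v) ↔
      ((∑' v : {v : V // IsLeafV par v}, (‖f v.1‖₊ : ℝ≥0∞)) < ⊤ ∧
        (⨆ n : ℕ, ∑' v : {v : V // gen v = (n : ℤ)}, (‖f v.1‖₊ : ℝ≥0∞)) < ⊤)) ∧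
    ∀ m₁ m₂ : MeasureTheory.VectorMeasure (TreeBoundary par) 𝕜,
      (∀ v : V, m₁ (boundaryThrough par v) = f v) →
      (∀ v : V, m₂ (boundaryThrough par v) = f v) → m₁ = m₂ := by
  have : Nonempty V := hgen0.nonempty
  exact statement19_general hTree hgen hflow

end PaperTree
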